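/- (Differentiability of the multi-risk solution in the weight vector.) Let F₁, …, F₅ be distribution functions of probability measures on [0,∞) vanishing at 0, with compounding operators Ψⱼ = Ψ_{Fⱼ}, and let g : [0,∞) → ℝ be measurable and locally bounded. For γ ∈ ℝ⁵ write ⟨γ,Ψ⟩h = Σ_{j=1}^5 γⱼ Ψⱼ h. Then for each x ≥ 0 the series u_{γ,g}(x) = Σ_{n=0}^∞ (⟨γ,Ψ⟩ⁿ g)(x) converges, γ ↦ u_{γ,g}(x) is differentiable on ℝ⁵ (indeed analytic), and ∂u_{γ,g}(x)/∂γⱼ = u_{γ, Ψⱼ u_{γ,g}}(x) for j = 1,…,5. -/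

import Mathlib

open MeasureTheory Set Filter

/-- The compounding operator `Ψ_F` associated with the probability measure `μ` on `[0,∞)`
(whose distribution function is `F`, so that `F(0) = 0` reads `μ (Iic 0) = 0`):
`(Ψ_F h)(x) = ∫₀ˣ (h(z) - ∫₀ᶻ h(z-y) dF(y)) dz`,
the inner integral being the Lebesgue–Stieltjes integral with respect to `F`. -/
noncomputable def Psi (μ : Measure ℝ) (h : ℝ → ℝ) : ℝ → ℝ :=
  fun x => ∫ z in (0:ℝ)..x, (h z - ∫ y in Icc (0:ℝ) z, h (z - y) ∂μ)

/-- `h : [0,∞) → ℝ` is locally bounded. -/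
def LocBdd (h : ℝ → ℝ) : Prop :=
  ∀ x : ℝ, ∃ M : ℝ, ∀ z ∈ Icc (0:ℝ) x, |h z| ≤ M

/-- `‖h‖_{[0,x]} = sup_{z ∈ [0,x]} |h z|`. -/
noncomputable def supNorm (h : ℝ → ℝ) (x : ℝ) : ℝ :=
  sSup ((fun z => |h z|) '' Icc (0:ℝ) x)

/-- The combined operator `⟨γ,Ψ⟩ h = Σ_{j=1}^5 γⱼ Ψⱼ h`. -/
noncomputable def PsiVec (μ : Fin 5 → Measure ℝ) (γ : Fin 5 → ℝ) (h : ℝ → ℝ) : ℝ → ℝ :=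
  fun x => ∑ j, γ j * Psi (μ j) h x

/-- `u_{γ,g}(x) = Σ_{n=0}^∞ (⟨γ,Ψ⟩ⁿ g)(x)`. -/
noncomputable def uSol (μ : Fin 5 → Measure ℝ) (γ : Fin 5 → ℝ) (g : ℝ → ℝ) : ℝ → ℝ :=
  fun x => ∑' n : ℕ, ((PsiVec μ γ)^[n] g) x

open scoped ENNReal Nat

section PsiLemmas

variable {μ : Measure ℝ} {h h' : ℝ → ℝ}

/-- The integrand defining `Psi μ h`. -/
noncomputable def psiKernel (μ : Measure ℝ) (h : ℝ → ℝ) (z : ℝ) : ℝ :=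
  h z - ∫ y in Icc (0:ℝ) z, h (z - y) ∂μ

theorem Psi_apply (x : ℝ) : Psi μ h x = ∫ z in (0:ℝ)..x, psiKernel μ h z := rfl

theorem measurable_psiKernel [SFinite μ] (hh : Measurable h) : Measurable (psiKernel μ h) := by
  refine hh.sub ?_
  have hs : MeasurableSet {p : ℝ × ℝ | 0 ≤ p.2 ∧ p.2 ≤ p.1} :=
    (measurableSet_le measurable_const measurable_snd).inter
      (measurableSet_le measurable_snd measurable_fst)
  have hm : Measurable ({p : ℝ × ℝ | 0 ≤ p.2 ∧ p.2 ≤ p.1}.indicator fun p => h (p.1 - p.2)) :=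
    (hh.comp (measurable_fst.sub measurable_snd)).indicator hs
  have key := (hm.stronglyMeasurable.integral_prod_right' (ν := μ)).measurable
  convert key using 2 with z
  rw [← integral_indicator measurableSet_Icc]
  rfl

theorem abs_psiKernel_le [IsProbabilityMeasure μ] {z b : ℝ} (hz : 0 ≤ z)
    (hb : ∀ w ∈ Icc 0 z, |h w| ≤ b) : |psiKernel μ h z| ≤ 2 * b := by
  have hb0 : 0 ≤ b := (abs_nonneg _).trans (hb z ⟨hz, le_rfl⟩)
  have hint : |∫ y in Icc (0:ℝ) z, h (z - y) ∂μ| ≤ b * μ.real (Icc 0 z) := by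
    rw [← Real.norm_eq_abs]
    exact norm_setIntegral_le_of_norm_le_const (measure_lt_top _ _) fun y hy =>
      hb _ ⟨by linarith [hy.2], by linarith [hy.1]⟩
  have h1 : b * μ.real (Icc 0 z) ≤ b := mul_le_of_le_one_right hb0 measureReal_le_one
  have h2 := abs_sub (h z) (∫ y in Icc (0:ℝ) z, h (z - y) ∂μ)
  have h3 := hb z ⟨hz, le_rfl⟩
  unfold psiKernel
  linarith

theorem psiKernel_congr {z : ℝ} (hz : 0 ≤ z) (hh : EqOn h h' (Icc 0 z)) :
    psiKernel μ h z = psiKernel μ h' z := by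
  unfold psiKernel
  rw [hh ⟨hz, le_rfl⟩]
  congr 1
  exact setIntegral_congr_fun measurableSet_Icc fun y hy =>
    hh ⟨by linarith [hy.2], by linarith [hy.1]⟩

theorem Psi_congr {X : ℝ} (hh : EqOn h h' (Icc 0 X)) : EqOn (Psi μ h) (Psi μ h') (Icc 0 X) := by
  intro x hx
  refine intervalIntegral.integral_congr fun z hz => ?_
  rw [uIcc_of_le hx.1] at hz
  exact psiKernel_congr hz.1 (hh.mono (Icc_subset_Icc_right (hz.2.trans hx.2)))

theorem abs_Psi_le_of_abs_le_pow [IsProbabilityMeasure μ] {X c : ℝ} {n : ℕ}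
    (hc : 0 ≤ c) (hh : ∀ w ∈ Icc 0 X, |h w| ≤ c * w ^ n) {x : ℝ} (hx : x ∈ Icc 0 X) :
    |Psi μ h x| ≤ 2 * c * (x ^ (n + 1) / (n + 1)) := by
  have hle : ∀ᵐ z, z ∈ Ioc 0 x → ‖psiKernel μ h z‖ ≤ 2 * c * z ^ n := by
    refine Eventually.of_forall fun z hz => ?_
    have := abs_psiKernel_le (μ := μ) (h := h) (b := c * z ^ n) hz.1.le fun w hw =>
      (hh w ⟨hw.1, hw.2.trans (hz.2.trans hx.2)⟩).trans
        (mul_le_mul_of_nonneg_left (pow_le_pow_left₀ hw.1 hw.2 n) hc)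
    rw [Real.norm_eq_abs]
    linarith
  have := intervalIntegral.norm_integral_le_of_norm_le hx.1 hle
    (Continuous.intervalIntegrable (by fun_prop) _ _)
  rw [intervalIntegral.integral_const_mul, integral_pow] at this
  simpa [Psi_apply] using this

variable {C C' : ℝ}

theorem abs_psiKernel_le_of_bounded [IsProbabilityMeasure μ] (hb : ∀ w, |h w| ≤ C) (z : ℝ) :
    |psiKernel μ h z| ≤ 2 * C := by
  rcases le_or_gt 0 z with hz | hz
  · exact abs_psiKernel_le hz fun w _ => hb w
  · have := hb z
    have := abs_nonneg (h z)
    simp only [psiKernel, Icc_eq_empty_of_lt hz, Measure.restrict_empty, integral_zero_measure,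
      sub_zero]
    linarith

theorem intervalIntegrable_psiKernel [IsProbabilityMeasure μ] (hm : Measurable h)
    (hb : ∀ w, |h w| ≤ C) (a b : ℝ) : IntervalIntegrable (psiKernel μ h) volume a b :=
  (intervalIntegrable_const (c := 2 * C)).mono_fun (measurable_psiKernel hm).aestronglyMeasurable
    (Eventually.of_forall fun z =>
      (abs_psiKernel_le_of_bounded hb z).trans (le_abs_self _))

theorem measurable_Psi [IsProbabilityMeasure μ] (hm : Measurable h) (hb : ∀ w, |h w| ≤ C) :
    Measurable (Psi μ h) :=
  (intervalIntegral.continuous_primitive (intervalIntegrable_psiKernel hm hb) 0).measurable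

theorem psiKernel_add [IsProbabilityMeasure μ] (hm : Measurable h) (hb : ∀ w, |h w| ≤ C)
    (hm' : Measurable h') (hb' : ∀ w, |h' w| ≤ C') (z : ℝ) :
    psiKernel μ (h + h') z = psiKernel μ h z + psiKernel μ h' z := by
  have hint : ∀ {f : ℝ → ℝ} {D : ℝ}, Measurable f → (∀ w, |f w| ≤ D) →
      Integrable (fun y => f (z - y)) (μ.restrict (Icc 0 z)) := fun hf hD =>
    Integrable.of_bound (hf.comp (measurable_const.sub measurable_id)).aestronglyMeasurable _
      (Eventually.of_forall fun y => hD _)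
  simp only [psiKernel, Pi.add_apply]
  rw [integral_add (hint hm hb) (hint hm' hb')]
  ring

theorem Psi_add [IsProbabilityMeasure μ] (hm : Measurable h) (hb : ∀ w, |h w| ≤ C)
    (hm' : Measurable h') (hb' : ∀ w, |h' w| ≤ C') (x : ℝ) :
    Psi μ (h + h') x = Psi μ h x + Psi μ h' x := by
  simp only [Psi_apply, psiKernel_add hm hb hm' hb']
  exact intervalIntegral.integral_add (intervalIntegrable_psiKernel hm hb 0 x)
    (intervalIntegrable_psiKernel hm' hb' 0 x)

theorem Psi_smul (c x : ℝ) : Psi μ (c • h) x = c * Psi μ h x := by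
  have : ∀ z, psiKernel μ (c • h) z = c * psiKernel μ h z := fun z => by
    simp only [psiKernel, Pi.smul_apply, smul_eq_mul]
    rw [integral_const_mul]
    ring
  simp only [Psi_apply, this, intervalIntegral.integral_const_mul]

theorem PsiVec_congr {ν : Fin 5 → Measure ℝ} (γ : Fin 5 → ℝ) {X : ℝ}
    (hh : EqOn h h' (Icc 0 X)) : EqOn (PsiVec ν γ h) (PsiVec ν γ h') (Icc 0 X) := fun _ hx =>
  Finset.sum_congr rfl fun _ _ => by rw [Psi_congr hh hx]

end PsiLemmas

/-- The bounded measurable functions on `ℝ`, as a subspace of `ℓ^∞(ℝ)`. -/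
def boundedMeasurableSubmodule : Submodule ℝ (lp (fun _ : ℝ => ℝ) ∞) where
  carrier := {f | Measurable (f : ℝ → ℝ)}
  add_mem' hf hg := Measurable.add hf hg
  zero_mem' := measurable_zero
  smul_mem' c _ hf := Measurable.const_smul hf c

theorem isClosed_boundedMeasurableSubmodule :
    IsClosed (boundedMeasurableSubmodule : Set (lp (fun _ : ℝ => ℝ) ∞)) := by
  refine IsSeqClosed.isClosed fun u f hu huf => ?_
  refine measurable_of_tendsto_metrizable (f := fun n => (u n : ℝ → ℝ)) hu ?_
  rw [tendsto_pi_nhds]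
  exact fun x => ((lp.evalCLM ℝ (fun _ : ℝ => ℝ) ∞ x).continuous.tendsto f).comp huf

/-- The Banach space of bounded measurable functions on `ℝ` with the supremum norm. -/
def BoundedMeasurable : Type := boundedMeasurableSubmodule

namespace BoundedMeasurable

noncomputable instance : NormedAddCommGroup BoundedMeasurable :=
  inferInstanceAs (NormedAddCommGroup boundedMeasurableSubmodule)

noncomputable instance : NormedSpace ℝ BoundedMeasurable :=
  inferInstanceAs (NormedSpace ℝ boundedMeasurableSubmodule)

instance : CompleteSpace BoundedMeasurable :=
  isClosed_boundedMeasurableSubmodule.isComplete.completeSpace_coe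

instance : CoeFun BoundedMeasurable fun _ => ℝ → ℝ := ⟨fun f => f.1⟩

theorem coe_add (f g : BoundedMeasurable) : ((f + g : BoundedMeasurable) : ℝ → ℝ) = f + g := rfl

theorem coe_smul (c : ℝ) (f : BoundedMeasurable) :
    ((c • f : BoundedMeasurable) : ℝ → ℝ) = c • (f : ℝ → ℝ) := rfl

theorem ext {f g : BoundedMeasurable} (h : ∀ x, f x = g x) : f = g :=
  Subtype.ext <| lp.ext <| funext h

theorem measurable (f : BoundedMeasurable) : Measurable f := f.2

theorem abs_apply_le (f : BoundedMeasurable) (x : ℝ) : |f x| ≤ ‖f‖ :=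
  lp.norm_apply_le_norm ENNReal.top_ne_zero f.1 x

theorem norm_le {f : BoundedMeasurable} {C : ℝ} (hC : 0 ≤ C) (hf : ∀ x, |f x| ≤ C) : ‖f‖ ≤ C :=
  lp.norm_le_of_forall_le (f := f.1) hC hf

/-- A bounded measurable function as an element of `BoundedMeasurable`. -/
def mk (f : ℝ → ℝ) (hm : Measurable f) (hb : ∃ C, ∀ x, |f x| ≤ C) : BoundedMeasurable :=
  ⟨⟨f, memℓp_infty (hb.imp fun _ hC => forall_mem_range.2 hC)⟩, hm⟩

theorem mk_apply (f : ℝ → ℝ) (hm : Measurable f) (hb : ∃ C, ∀ x, |f x| ≤ C) (x : ℝ) :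
    mk f hm hb x = f x := rfl

/-- Evaluation at a point. -/
noncomputable def eval (x : ℝ) : BoundedMeasurable →L[ℝ] ℝ :=
  (lp.evalCLM ℝ (fun _ : ℝ => ℝ) ∞ x).comp boundedMeasurableSubmodule.subtypeL

@[simp]
theorem eval_apply (x : ℝ) (f : BoundedMeasurable) : eval x f = f x := rfl

variable (X : ℝ)

theorem abs_indicator_Psi_le (μ : Measure ℝ) [IsProbabilityMeasure μ] (f : BoundedMeasurable)
    (x : ℝ) : |(Icc 0 X).indicator (Psi μ f) x| ≤ 2 * |X| * ‖f‖ := by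
  by_cases hx : x ∈ Icc 0 X
  · rw [indicator_of_mem hx]
    have := abs_Psi_le_of_abs_le_pow (μ := μ) (h := f) (n := 0) (norm_nonneg f)
      (fun w _ => by simpa using abs_apply_le f w) hx
    have hX : x ≤ |X| := hx.2.trans (le_abs_self X)
    have := mul_le_mul_of_nonneg_left hX (norm_nonneg f)
    norm_num at *
    linarith
  · rw [indicator_of_notMem hx, abs_zero]
    positivity

/-- The operator `Psi μ` truncated to `[0, X]`, acting on bounded measurable functions. -/
noncomputable def psiCLM (μ : Measure ℝ) [IsProbabilityMeasure μ] :
    BoundedMeasurable →L[ℝ] BoundedMeasurable :=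
  LinearMap.mkContinuous
    { toFun := fun f => mk ((Icc 0 X).indicator (Psi μ f))
        ((measurable_Psi f.measurable f.abs_apply_le).indicator measurableSet_Icc)
        ⟨_, abs_indicator_Psi_le X μ f⟩
      map_add' := fun f g => ext fun x => by
        by_cases hx : x ∈ Icc 0 X
        · simpa [mk_apply, coe_add, hx] using
            Psi_add f.measurable f.abs_apply_le g.measurable g.abs_apply_le x
        · simp [mk_apply, coe_add, hx]
      map_smul' := fun c f => ext fun x => by
        by_cases hx : x ∈ Icc 0 X
        · simpa [mk_apply, coe_smul, hx] using Psi_smul (μ := μ) (h := f) c x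
        · simp [mk_apply, coe_smul, hx] }
    (2 * |X|) fun f => norm_le (by positivity) (abs_indicator_Psi_le X μ f)

theorem psiCLM_apply (μ : Measure ℝ) [IsProbabilityMeasure μ] (f : BoundedMeasurable) :
    (psiCLM X μ f : ℝ → ℝ) = (Icc 0 X).indicator (Psi μ f) := rfl

variable (μ : Fin 5 → Measure ℝ) [∀ j, IsProbabilityMeasure (μ j)]

/-- The linear dependence of the combined truncated operator on the weight vector. -/
noncomputable def psiVecCLM :
    (Fin 5 → ℝ) →L[ℝ] (BoundedMeasurable →L[ℝ] BoundedMeasurable) :=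
  ∑ j, (ContinuousLinearMap.proj j : (Fin 5 → ℝ) →L[ℝ] ℝ).smulRight (psiCLM X (μ j))

theorem psiVecCLM_apply (γ : Fin 5 → ℝ) : psiVecCLM X μ γ = ∑ j, γ j • psiCLM X (μ j) := by
  simp [psiVecCLM]

theorem psiVecCLM_single (j : Fin 5) : psiVecCLM X μ (Pi.single j 1) = psiCLM X (μ j) := by
  simp [psiVecCLM_apply, Pi.single_apply]

theorem psiVecCLM_apply_apply (γ : Fin 5 → ℝ) (f : BoundedMeasurable) (x : ℝ) :
    psiVecCLM X μ γ f x = (Icc 0 X).indicator (PsiVec μ γ f) x := by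
  have : psiVecCLM X μ γ f x = ∑ j, γ j * psiCLM X (μ j) f x := by
    rw [← eval_apply, psiVecCLM_apply]
    simp
  rw [this]
  by_cases hx : x ∈ Icc 0 X <;> simp [psiCLM_apply, hx, PsiVec]

variable {X μ}

theorem eqOn_iterate_PsiVec (γ : Fin 5 → ℝ) {f : BoundedMeasurable} {h : ℝ → ℝ}
    (hf : EqOn h f (Icc 0 X)) (n : ℕ) :
    EqOn ((PsiVec μ γ)^[n] h) ((psiVecCLM X μ γ ^ n) f) (Icc 0 X) := by
  induction n with
  | zero => simpa using hf
  | succ n ih =>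
    intro x hx
    rw [Function.iterate_succ_apply', pow_succ', mul_apply_eq_comp,
      psiVecCLM_apply_apply, indicator_of_mem hx]
    exact PsiVec_congr γ ih hx

theorem abs_pow_psiVecCLM_apply_le (γ : Fin 5 → ℝ) (f : BoundedMeasurable) (n : ℕ) :
    ∀ x ∈ Icc 0 X,
      |(psiVecCLM X μ γ ^ n) f x| ≤ ‖f‖ * (2 * ∑ j, |γ j|) ^ n / n ! * x ^ n := by
  induction n with
  | zero => intro x _; simpa using abs_apply_le f x
  | succ n ih =>
    intro x hx
    rw [pow_succ', mul_apply_eq_comp, psiVecCLM_apply_apply, indicator_of_mem hx,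
      PsiVec]
    have hc : 0 ≤ ‖f‖ * (2 * ∑ j, |γ j|) ^ n / n ! := by positivity
    calc |∑ j, γ j * Psi (μ j) ((psiVecCLM X μ γ ^ n) f) x|
        ≤ ∑ j, |γ j| * (2 * (‖f‖ * (2 * ∑ j, |γ j|) ^ n / n !) * (x ^ (n + 1) / (n + 1))) := by
          refine (Finset.abs_sum_le_sum_abs _ _).trans (Finset.sum_le_sum fun j _ => ?_)
          rw [abs_mul]
          exact mul_le_mul_of_nonneg_left (abs_Psi_le_of_abs_le_pow hc ih hx) (abs_nonneg _)
      _ = _ := by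
          rw [← Finset.sum_mul, Nat.factorial_succ]
          push_cast
          field_simp
          ring

theorem norm_pow_psiVecCLM_le (hX : 0 ≤ X) (γ : Fin 5 → ℝ) (n : ℕ) :
    ‖psiVecCLM X μ γ ^ n‖ ≤ ((2 * ∑ j, |γ j|) * X) ^ n / n ! := by
  refine ContinuousLinearMap.opNorm_le_bound _ (by positivity) fun f =>
    norm_le (by positivity) fun x => ?_
  by_cases hx : x ∈ Icc 0 X
  · refine (abs_pow_psiVecCLM_apply_le γ f n x hx).trans ?_
    calc ‖f‖ * (2 * ∑ j, |γ j|) ^ n / n ! * x ^ n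
        ≤ ‖f‖ * (2 * ∑ j, |γ j|) ^ n / n ! * X ^ n := by
          gcongr
          exacts [hx.1, hx.2]
      _ = _ := by rw [mul_pow]; ring
  · cases n with
    | zero => simpa using abs_apply_le f x
    | succ n =>
      rw [pow_succ', mul_apply_eq_comp, psiVecCLM_apply_apply,
        indicator_of_notMem hx, abs_zero]
      positivity

theorem summable_pow_psiVecCLM (hX : 0 ≤ X) (γ : Fin 5 → ℝ) :
    Summable fun n : ℕ => psiVecCLM X μ γ ^ n :=
  .of_norm_bounded (Real.summable_pow_div_factorial _) (norm_pow_psiVecCLM_le hX γ)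

variable (μ) in
/-- `1 - ⟨γ,Ψ⟩` is invertible, with inverse the Neumann series. -/
noncomputable def oneSubUnit (hX : 0 ≤ X) (γ : Fin 5 → ℝ) :
    (BoundedMeasurable →L[ℝ] BoundedMeasurable)ˣ where
  val := 1 - psiVecCLM X μ γ
  inv := ∑' n : ℕ, psiVecCLM X μ γ ^ n
  val_inv := (summable_pow_psiVecCLM hX γ).one_sub_mul_tsum_pow
  inv_val := (summable_pow_psiVecCLM hX γ).tsum_pow_mul_one_sub

theorem hasSum_iterate_PsiVec (hX : 0 ≤ X) (γ : Fin 5 → ℝ) {f : BoundedMeasurable} {h : ℝ → ℝ}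
    (hf : EqOn h f (Icc 0 X)) {x : ℝ} (hx : x ∈ Icc 0 X) :
    HasSum (fun n : ℕ => ((PsiVec μ γ)^[n] h) x)
      (eval x (Ring.inverse (1 - psiVecCLM X μ γ) f)) := by
  have hinv : Ring.inverse (1 - psiVecCLM X μ γ) = ∑' n : ℕ, psiVecCLM X μ γ ^ n :=
    Ring.inverse_unit (oneSubUnit μ hX γ)
  have := ((eval x).comp (ContinuousLinearMap.apply ℝ BoundedMeasurable f)).hasSum
    (summable_pow_psiVecCLM (μ := μ) hX γ).hasSum
  rw [hinv]
  simpa [Function.comp_def, eqOn_iterate_PsiVec γ hf _ hx] using this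

theorem uSol_eq (hX : 0 ≤ X) (γ : Fin 5 → ℝ) {f : BoundedMeasurable} {h : ℝ → ℝ}
    (hf : EqOn h f (Icc 0 X)) {x : ℝ} (hx : x ∈ Icc 0 X) :
    uSol μ γ h x = eval x (Ring.inverse (1 - psiVecCLM X μ γ) f) :=
  (hasSum_iterate_PsiVec hX γ hf hx).tsum_eq

theorem analyticAt_resolvent (hX : 0 ≤ X) (γ : Fin 5 → ℝ) :
    AnalyticAt ℝ (fun γ' => Ring.inverse (1 - psiVecCLM X μ γ')) γ := by
  have hA : AnalyticAt ℝ (fun γ' => 1 - psiVecCLM X μ γ') γ :=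
    analyticAt_const.sub ((psiVecCLM X μ).analyticAt γ)
  exact AnalyticAt.fun_comp (g := Ring.inverse) (analyticAt_inverse (oneSubUnit μ hX γ)) hA

theorem fderiv_resolvent_single (hX : 0 ≤ X) (γ : Fin 5 → ℝ) (j : Fin 5) :
    fderiv ℝ (fun γ' => Ring.inverse (1 - psiVecCLM X μ γ')) γ (Pi.single j 1) =
      Ring.inverse (1 - psiVecCLM X μ γ) * psiCLM X (μ j) *
        Ring.inverse (1 - psiVecCLM X μ γ) := by
  have hA : HasFDerivAt (fun γ' => 1 - psiVecCLM X μ γ') (-psiVecCLM X μ) γ :=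
    (psiVecCLM X μ).hasFDerivAt.const_sub 1
  have hinv : Ring.inverse (1 - psiVecCLM X μ γ) = ↑(oneSubUnit μ hX γ)⁻¹ :=
    Ring.inverse_unit (oneSubUnit μ hX γ)
  have hR := (hasFDerivAt_ringInverse (𝕜 := ℝ) (oneSubUnit μ hX γ)).comp γ hA
  rw [hinv]
  refine (congrArg (· (Pi.single j 1)) hR.fderiv).trans ?_
  simp [psiVecCLM_single]

end BoundedMeasurable

/-- differentiability of the multi-risk solution in the weight vector: for
each `x ≥ 0` the series `Σ_n (⟨γ,Ψ⟩ⁿ g)(x)` converges, `γ ↦ u_{γ,g}(x)` is differentiable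
(indeed analytic) on `ℝ⁵`, and `∂u_{γ,g}(x)/∂γⱼ = u_{γ, Ψⱼ u_{γ,g}}(x)` for each `j`. -/
theorem multi_risk_solution_differentiable
    (μ : Fin 5 → Measure ℝ) [∀ j, IsProbabilityMeasure (μ j)]
    (hμ0 : ∀ j, μ j (Iic 0) = 0)
    (g : ℝ → ℝ) (hg : Measurable g) (hgb : LocBdd g) :
    ∀ x ≥ (0:ℝ), ∀ γ : Fin 5 → ℝ,
      Summable (fun n : ℕ => ((PsiVec μ γ)^[n] g) x) ∧
      DifferentiableAt ℝ (fun γ' : Fin 5 → ℝ => uSol μ γ' g x) γ ∧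
      AnalyticAt ℝ (fun γ' : Fin 5 → ℝ => uSol μ γ' g x) γ ∧
      ∀ j : Fin 5, fderiv ℝ (fun γ' : Fin 5 → ℝ => uSol μ γ' g x) γ (Pi.single j 1) =
        uSol μ γ (Psi (μ j) (uSol μ γ g)) x := by
  intro x hx γ
  obtain ⟨M, hM⟩ := hgb x
  have hbdd : ∃ C, ∀ z, |(Icc 0 x).indicator g z| ≤ C := by
    refine ⟨max M 0, fun z => ?_⟩
    by_cases hz : z ∈ Icc 0 x
    · rw [indicator_of_mem hz]
      exact (hM z hz).trans (le_max_left _ _)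
    · rw [indicator_of_notMem hz, abs_zero]
      exact le_max_right _ _
  let f := BoundedMeasurable.mk _ (hg.indicator measurableSet_Icc) hbdd
  have hf : EqOn g f (Icc 0 x) := fun z hz => (indicator_of_mem hz g).symm
  have hxx : x ∈ Icc 0 x := ⟨hx, le_rfl⟩
  let L := (BoundedMeasurable.eval x).comp (ContinuousLinearMap.apply ℝ BoundedMeasurable f)
  have hu : (fun γ' => uSol μ γ' g x) =
      fun γ' => L (Ring.inverse (1 - BoundedMeasurable.psiVecCLM x μ γ')) :=
    funext fun γ' => BoundedMeasurable.uSol_eq hx γ' hf hxx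
  have hR := BoundedMeasurable.analyticAt_resolvent (μ := μ) hx γ
  have han : AnalyticAt ℝ (fun γ' => uSol μ γ' g x) γ := by
    rw [hu]
    exact (L.analyticAt _).fun_comp hR
  refine ⟨(BoundedMeasurable.hasSum_iterate_PsiVec hx γ hf hxx).summable,
    han.differentiableAt, han, fun j => ?_⟩
  have hj : EqOn (Psi (μ j) (uSol μ γ g)) (BoundedMeasurable.psiCLM x (μ j)
      (Ring.inverse (1 - BoundedMeasurable.psiVecCLM x μ γ) f)) (Icc 0 x) := fun z hz => by
    rw [BoundedMeasurable.psiCLM_apply, indicator_of_mem hz]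
    exact Psi_congr (fun w hw => BoundedMeasurable.uSol_eq hx γ hf hw) hz
  rw [BoundedMeasurable.uSol_eq hx γ hj hxx, hu]
  refine (congrArg (· (Pi.single j 1))
    (L.hasFDerivAt.comp γ hR.differentiableAt.hasFDerivAt).fderiv).trans ?_
  rw [ContinuousLinearMap.comp_apply, BoundedMeasurable.fderiv_resolvent_single hx]
  rfl
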